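/- Let A be a piecewise-Koszul algebra with period p and jump degree d, and let 0 → K → M → N → 0 be a short exact sequence of finitely generated graded A-modules. If K and N are piecewise-Koszul modules and both K and N are generated in the same degree s, then M is a piecewise-Koszul module. -/

import Mathlib

noncomputable section

/-- The jump function `δ^d_p(n) = ((n − (n mod p))/p)·d + (n mod p)`. -/
def jump (d p n : ℕ) : ℕ := (n - n % p) / p * d + n % p

/-- A positively graded `F`-algebra `A = ⊕_{i≥0} A_i`. -/
structure GradedAlg (F : Type) [Field F] where
  A : Type
  [ringA : Ring A]
  [algA : Algebra F A]
  grading : ℕ → Submodule F A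
  [graded : GradedAlgebra grading]

attribute [instance] GradedAlg.ringA GradedAlg.algA GradedAlg.graded

namespace GradedAlg

variable {F : Type} [Field F] (𝒜 : GradedAlg F)

/-- The graded Jacobson radical `J = ⊕_{i≥1} A_i`, i.e. the irrelevant ideal. -/
def jideal : Ideal 𝒜.A := (HomogeneousIdeal.irrelevant 𝒜.grading).toIdeal

/-- The standing assumptions: `A_0` is a semisimple Artin algebra, `A` is generated in
degrees 0 and 1 (`A_i · A_j = A_{i+j}`), and `A_1` is finite dimensional over `F`. -/
structure Standing : Prop where
  semisimple : IsSemisimpleRing ↥(𝒜.grading 0)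
  artinian : IsArtinianRing ↥(𝒜.grading 0)
  gen01 : ∀ i j : ℕ, 𝒜.grading i * 𝒜.grading j = 𝒜.grading (i + j)
  findim : FiniteDimensional F ↥(𝒜.grading 1)

/-- A (ℤ-)graded module over the graded algebra `𝒜`. -/
structure GMod where
  M : Type
  [acg : AddCommGroup M]
  [modF : Module F M]
  [modA : Module 𝒜.A M]
  [tower : IsScalarTower F 𝒜.A M]
  [scomm : SMulCommClass 𝒜.A F M]
  grading : ℤ → Submodule F M
  sup_eq_top : (⨆ j : ℤ, grading j) = ⊤
  indep : iSupIndep grading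
  smul_mem : ∀ {i : ℕ} {j : ℤ} {a : 𝒜.A} {m : M},
    a ∈ 𝒜.grading i → m ∈ grading j → a • m ∈ grading ((i : ℤ) + j)

attribute [instance] GMod.acg GMod.modF GMod.modA GMod.tower GMod.scomm

variable {𝒜}

/-- A degree-zero morphism of graded modules. -/
structure GHom (M N : 𝒜.GMod) where
  lin : M.M →ₗ[𝒜.A] N.M
  grad : ∀ (j : ℤ) (x : M.M), x ∈ M.grading j → lin x ∈ N.grading j

/-- A graded module is generated in degree `s` if `A · M_s = M`. -/
def GMod.GenInDeg (M : 𝒜.GMod) (s : ℤ) : Prop :=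
  Submodule.span 𝒜.A (M.grading s : Set M.M) = ⊤

/-- `T` is the trivial graded module `A_0 = A/J`, concentrated in degree `0`. -/
def IsTrivialGMod (T : 𝒜.GMod) : Prop :=
  (∀ j : ℤ, j ≠ 0 → T.grading j = ⊥) ∧
    Nonempty (T.M ≃ₗ[𝒜.A] (𝒜.A ⧸ 𝒜.jideal))

/-- A minimal graded projective resolution
`⋯ → P_{n+1} → P_n → ⋯ → P_0 → M → 0` of the graded module `M`,
with finitely generated terms. -/
structure MinRes (M : 𝒜.GMod) where
  P : ℕ → 𝒜.GMod
  d : ∀ n : ℕ, GHom (P (n + 1)) (P n)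
  aug : GHom (P 0) M
  fg : ∀ n, Module.Finite 𝒜.A (P n).M
  projective : ∀ n, Module.Projective 𝒜.A (P n).M
  aug_surj : Function.Surjective aug.lin
  exact_aug : LinearMap.range (d 0).lin = LinearMap.ker aug.lin
  exact : ∀ n, LinearMap.range (d (n + 1)).lin = LinearMap.ker (d n).lin
  minimal : ∀ n, LinearMap.range (d n).lin ≤ 𝒜.jideal • (⊤ : Submodule 𝒜.A (P n).M)

variable (𝒜)

/-- `M` is a piecewise-Koszul module (period `p`, jump degree `d`, shift `s`):
it has a minimal graded projective resolution with `P_n` generated in degree `δ^d_p(n) + s`. -/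
def IsPKMod (p d : ℕ) (s : ℤ) (M : 𝒜.GMod) : Prop :=
  ∃ R : MinRes M, ∀ n : ℕ, (R.P n).GenInDeg ((jump d p n : ℤ) + s)

/-- `A` is a piecewise-Koszul algebra (period `p`, jump degree `d`): the trivial module `T`
admits a minimal graded projective resolution with `P_n` generated in degree `δ^d_p(n)`. -/
def IsPKAlg (p d : ℕ) (T : 𝒜.GMod) : Prop := IsPKMod 𝒜 p d 0 T

/-- A Koszul module: a minimal graded projective resolution with `P_n` generated in degree `n`. -/
def IsKoszulMod (M : 𝒜.GMod) : Prop :=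
  ∃ R : MinRes M, ∀ n : ℕ, (R.P n).GenInDeg (n : ℤ)

variable {𝒜}

section Ext

variable (T : 𝒜.GMod) {M : 𝒜.GMod}

/-- The space of `A`-linear maps `P_n → T` (cochains). -/
abbrev HomSp (R : MinRes M) (n : ℕ) := (R.P n).M →ₗ[𝒜.A] T.M

/-- Precomposition, as an `F`-linear map on cochains. -/
def precompF {M₁ M₂ : 𝒜.GMod} (g : M₁.M →ₗ[𝒜.A] M₂.M) :
    (M₂.M →ₗ[𝒜.A] T.M) →ₗ[F] (M₁.M →ₗ[𝒜.A] T.M) where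
  toFun f := f ∘ₗ g
  map_add' f₁ f₂ := by ext x; simp
  map_smul' c f := by ext x; simp

/-- Cocycles: maps `P_n → T` vanishing on the image of `P_{n+1}`. -/
def cocyc (R : MinRes M) (n : ℕ) : Submodule F (HomSp T R n) :=
  LinearMap.ker (precompF T (R.d n).lin)

/-- Coboundaries: maps `P_n → T` factoring through `d_{n-1}`. -/
def cobound (R : MinRes M) : (n : ℕ) → Submodule F (HomSp T R n)
  | 0 => ⊥
  | n + 1 => LinearMap.range (precompF T (R.d n).lin)

/-- The coboundaries, viewed inside the cocycles. -/
def extRel (R : MinRes M) (n : ℕ) : Submodule F ↥(cocyc T R n) :=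
  (cobound T R n).comap (cocyc T R n).subtype

/-- `Ext^n_A(M, T)`, computed from the resolution `R` of `M`. -/
abbrev ExtQ (R : MinRes M) (n : ℕ) := ↥(cocyc T R n) ⧸ extRel T R n

/-- The class in `Ext^n_A(M,T)` of a cocycle. -/
def extCls {R : MinRes M} {n : ℕ} {f : HomSp T R n} (hf : f ∈ cocyc T R n) :
    ExtQ T R n :=
  Submodule.Quotient.mk ⟨f, hf⟩

/-- Cochains of shift-degree `j`: maps `P_n → T` vanishing on every `(P_n)_i` with `i ≠ j`. -/
def homDeg (R : MinRes M) (n : ℕ) (j : ℤ) : Submodule F (HomSp T R n) where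
  carrier := {f | ∀ i : ℤ, i ≠ j → ∀ x ∈ (R.P n).grading i, f x = 0}
  add_mem' := fun hf hg i hi x hx => by
    simp only [LinearMap.add_apply, hf i hi x hx, hg i hi x hx, add_zero]
  zero_mem' := fun i hi x hx => rfl
  smul_mem' := fun c f hf i hi x hx => by
    simp only [LinearMap.smul_apply, hf i hi x hx, smul_zero]

/-- The shift-degree `j` component `Ext^n_A(M,T)_j`. -/
def extComp (R : MinRes M) (n : ℕ) (j : ℤ) : Submodule F (ExtQ T R n) :=
  Submodule.map (extRel T R n).mkQ ((homDeg T R n j).comap (cocyc T R n).subtype)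

/-- Transport `Ext` along an equality of cohomological degrees. -/
def extCast (R : MinRes M) {a b : ℕ} (h : a = b) : ExtQ T R a ≃ₗ[F] ExtQ T R b :=
  h ▸ LinearEquiv.refl F (ExtQ T R a)

/-- A chain map lifting of a cochain `g : P_j → T` over the resolutions `RM` of `M`
and `RT` of `T`. -/
structure ChainLift (RT : MinRes T) (RM : MinRes M) (j : ℕ)
    (g : (RM.P j).M →ₗ[𝒜.A] T.M) where
  ℓ : ∀ m k : ℕ, m = k + j → ((RM.P m).M →ₗ[𝒜.A] (RT.P k).M)
  comm_aug : RT.aug.lin ∘ₗ ℓ j 0 (by omega) = g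
  comm : ∀ k : ℕ, (RT.d k).lin ∘ₗ ℓ (k + j + 1) (k + 1) (by omega) =
    ℓ (k + j) k rfl ∘ₗ (RM.d (k + j)).lin

/-- `μ` is the (bigraded family of) Yoneda product(s)
`Ext^i(T,T) ⊗ Ext^j(M,T) → Ext^{i+j}(M,T)`: it is computed by composing a cocycle
`f : P_i → T` with a chain lifting of a cocycle `g : Q_j → T`. -/
def IsYonedaMul (RT : MinRes T) (RM : MinRes M)
    (μ : ∀ i j : ℕ, ExtQ T RT i →ₗ[F] ExtQ T RM j →ₗ[F] ExtQ T RM (i + j)) : Prop :=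
  ∀ (i j : ℕ) (f : HomSp T RT i) (hf : f ∈ cocyc T RT i)
    (g : HomSp T RM j) (hg : g ∈ cocyc T RM j)
    (L : ChainLift T RT RM j g)
    (hc : f ∘ₗ L.ℓ (i + j) i (by omega) ∈ cocyc T RM (i + j)),
    μ i j (extCls T hf) (extCls T hg) = extCls T hc

/-- `E(A) = Ext^*_A(A_0,A_0)` is generated in the ext-degrees belonging to `S`. -/
def ExtGenIn (RT : MinRes T)
    (μ : ∀ i j : ℕ, ExtQ T RT i →ₗ[F] ExtQ T RT j →ₗ[F] ExtQ T RT (i + j))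
    (S : Set ℕ) : Prop :=
  ∀ W : (n : ℕ) → Submodule F (ExtQ T RT n),
    (∀ n ∈ S, W n = ⊤) →
    (∀ (i j : ℕ) (x : ExtQ T RT i) (y : ExtQ T RT j),
      x ∈ W i → y ∈ W j → μ i j x y ∈ W (i + j)) →
    ∀ n, W n = ⊤

/-- `E(M) = Ext^*_A(M,A_0)` is generated in degree `0` as a graded `E(A)`-module. -/
def ExtModGenInZero (RT : MinRes T) (RM : MinRes M)
    (μ : ∀ i j : ℕ, ExtQ T RT i →ₗ[F] ExtQ T RM j →ₗ[F] ExtQ T RM (i + j)) : Prop :=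
  ∀ W : (n : ℕ) → Submodule F (ExtQ T RM n),
    W 0 = ⊤ →
    (∀ (i j : ℕ) (x : ExtQ T RT i) (y : ExtQ T RM j),
      y ∈ W j → μ i j x y ∈ W (i + j)) →
    ∀ n, W n = ⊤

end Ext

/-- `JM` is (a graded module isomorphic to) the submodule `J·M` of `M`. -/
def IsJM (M JM : 𝒜.GMod) : Prop :=
  ∃ e : JM.M ≃ₗ[𝒜.A] ↥(𝒜.jideal • (⊤ : Submodule 𝒜.A M.M)),
    ∀ (j : ℤ) (x : JM.M), x ∈ JM.grading j ↔ ((e x : M.M) ∈ M.grading j)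

/-- `Q` is (a graded module isomorphic to) the quotient `M/JM`. -/
def IsQuotJM (M Q : 𝒜.GMod) : Prop :=
  ∃ e : Q.M ≃ₗ[𝒜.A] (M.M ⧸ (𝒜.jideal • (⊤ : Submodule 𝒜.A M.M))),
    ∀ j : ℤ, Q.grading j = Submodule.map
      ((e.symm.toLinearMap ∘ₗ (𝒜.jideal • (⊤ : Submodule 𝒜.A M.M)).mkQ).restrictScalars F)
      (M.grading j)

/-- `W` is (isomorphic to) the `n`-th syzygy `Ω^n(M)` of `M` in the minimal graded
projective resolution `R`. -/
def IsSyzygy {M : 𝒜.GMod} (R : MinRes M) : ℕ → 𝒜.GMod → Prop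
  | 0, W => ∃ e : W.M ≃ₗ[𝒜.A] M.M,
      ∀ (j : ℤ) (x : W.M), x ∈ W.grading j ↔ e x ∈ M.grading j
  | 1, W => ∃ e : W.M ≃ₗ[𝒜.A] ↥(LinearMap.ker R.aug.lin),
      ∀ (j : ℤ) (x : W.M), x ∈ W.grading j ↔ ((e x : (R.P 0).M) ∈ (R.P 0).grading j)
  | (n + 2), W => ∃ e : W.M ≃ₗ[𝒜.A] ↥(LinearMap.ker (R.d n).lin),
      ∀ (j : ℤ) (x : W.M), x ∈ W.grading j ↔ ((e x : (R.P (n + 1)).M) ∈ (R.P (n + 1)).grading j)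

end GradedAlg

namespace GradedAlg

section Helpers

variable {F : Type} [Field F] {𝒜 : GradedAlg F}

theorem GMod.internal (M : 𝒜.GMod) : DirectSum.IsInternal M.grading :=
  DirectSum.isInternal_submodule_of_iSupIndep_of_iSup_eq_top M.indep M.sup_eq_top

/-- Every graded module has a decomposition. -/
def GMod.dec (M : 𝒜.GMod) : DirectSum.Decomposition M.grading :=
  M.internal.chooseDecomposition

/-- Projection to the degree `j` component. -/
def GMod.pr (M : 𝒜.GMod) (j : ℤ) : M.M →ₗ[F] M.M :=
  letI := M.dec
  (M.grading j).subtype ∘ₗ DirectSum.component F ℤ (fun i => M.grading i) j ∘ₗ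
    (DirectSum.decomposeLinearEquiv M.grading).toLinearMap

theorem GMod.pr_mem (M : 𝒜.GMod) (j : ℤ) (x : M.M) : M.pr j x ∈ M.grading j := by
  simp [GMod.pr]

theorem GMod.pr_same (M : 𝒜.GMod) {j : ℤ} {x : M.M} (hx : x ∈ M.grading j) :
    M.pr j x = x := by
  letI := M.dec
  exact DirectSum.decompose_of_mem_same M.grading hx

theorem GMod.pr_ne (M : 𝒜.GMod) {i j : ℤ} {x : M.M} (hx : x ∈ M.grading i) (h : i ≠ j) :
    M.pr j x = 0 := by
  letI := M.dec
  exact DirectSum.decompose_of_mem_ne M.grading hx h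

/-- Induction on homogeneous elements. -/
theorem GMod.induct (M : 𝒜.GMod) {p : M.M → Prop} (h0 : p 0)
    (hom : ∀ j, ∀ x ∈ M.grading j, p x) (hadd : ∀ x y, p x → p y → p (x + y)) (x : M.M) :
    p x := by
  have hx : x ∈ ⨆ j : ℤ, M.grading j := by rw [M.sup_eq_top]; trivial
  exact Submodule.iSup_induction _ (motive := p) hx hom h0 hadd

theorem alg_induct {p : 𝒜.A → Prop} (h0 : p 0)
    (hom : ∀ j, ∀ x ∈ 𝒜.grading j, p x) (hadd : ∀ x y, p x → p y → p (x + y)) (x : 𝒜.A) :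
    p x :=
  DirectSum.Decomposition.inductionOn 𝒜.grading h0 (fun {i} m => hom i m m.2) hadd x

theorem GMod.pr_smul (M : 𝒜.GMod) {i : ℕ} {a : 𝒜.A} (ha : a ∈ 𝒜.grading i) (j : ℤ) (x : M.M) :
    M.pr (i + j) (a • x) = a • M.pr j x := by
  induction x using M.induct with
  | h0 => simp
  | hom k x hx =>
    by_cases h : k = j
    · subst h
      rw [M.pr_same hx, M.pr_same (M.smul_mem ha hx)]
    · rw [M.pr_ne hx h, M.pr_ne (M.smul_mem ha hx) (by omega), smul_zero]
  | hadd x y hx hy => simp only [smul_add, map_add, hx, hy]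

/-- The degree zero part of a linear map, as an `F`-linear map. -/
def degZeroF (P X : 𝒜.GMod) (h : P.M →ₗ[𝒜.A] X.M) : P.M →ₗ[F] X.M :=
  letI := P.dec
  DirectSum.toModule F ℤ X.M
    (fun j => X.pr j ∘ₗ (h.restrictScalars F) ∘ₗ (P.grading j).subtype) ∘ₗ
    (DirectSum.decomposeLinearEquiv P.grading).toLinearMap

theorem degZeroF_hom (P X : 𝒜.GMod) (h : P.M →ₗ[𝒜.A] X.M) {j : ℤ} {x : P.M}
    (hx : x ∈ P.grading j) : degZeroF P X h x = X.pr j (h x) := by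
  letI := P.dec
  have e : (DirectSum.decomposeLinearEquiv P.grading) x =
      DirectSum.lof F ℤ (fun i => P.grading i) j ⟨x, hx⟩ :=
    DirectSum.decompose_of_mem P.grading hx
  change DirectSum.toModule F ℤ X.M
    (fun j => X.pr j ∘ₗ (h.restrictScalars F) ∘ₗ (P.grading j).subtype)
    ((DirectSum.decomposeLinearEquiv P.grading) x) = _
  rw [e, DirectSum.toModule_lof]
  rfl

/-- The degree zero part of a linear map. -/
def degZero (P X : 𝒜.GMod) (h : P.M →ₗ[𝒜.A] X.M) : GHom P X where
  lin :=
    { toFun := degZeroF P X h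
      map_add' := map_add _
      map_smul' := by
        intro a x
        simp only [RingHom.id_apply]
        induction x using P.induct with
        | h0 => simp
        | hadd x y hx hy => simp only [smul_add, map_add, hx, hy]
        | hom j x hx =>
          induction a using alg_induct with
          | h0 => simp
          | hadd a b ha hb => simp only [add_smul, map_add, ha, hb]
          | hom i a ha =>
            rw [degZeroF_hom P X h (P.smul_mem ha hx), degZeroF_hom P X h hx, map_smul,
              X.pr_smul ha] }
  grad := fun j x hx => by
    change degZeroF P X h x ∈ _
    rw [degZeroF_hom P X h hx]
    exact X.pr_mem _ _

theorem GHom.pr {X Y : 𝒜.GMod} (g : GHom X Y) (j : ℤ) (x : X.M) :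
    g.lin (X.pr j x) = Y.pr j (g.lin x) := by
  induction x using X.induct with
  | h0 => simp
  | hom k x hx =>
    by_cases h : k = j
    · subst h
      rw [X.pr_same hx, Y.pr_same (g.grad _ _ hx)]
    · rw [X.pr_ne hx h, Y.pr_ne (g.grad _ _ hx) h, map_zero]
  | hadd x y hx hy => simp only [map_add, hx, hy]

theorem graded_lift {P X Y : 𝒜.GMod} (hP : Module.Projective 𝒜.A P.M) (e : GHom X Y)
    (g : GHom P Y) (hr : ∀ x, g.lin x ∈ LinearMap.range e.lin) :
    ∃ h : GHom P X, ∀ x, e.lin (h.lin x) = g.lin x := by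
  obtain ⟨h, hh⟩ := Module.projective_lifting_property e.lin.rangeRestrict
    (g.lin.codRestrict (LinearMap.range e.lin) hr) e.lin.surjective_rangeRestrict
  have hh' : ∀ x, e.lin (h x) = g.lin x := fun x =>
    congrArg Subtype.val (LinearMap.congr_fun hh x)
  refine ⟨degZero P X h, fun x => ?_⟩
  induction x using P.induct with
  | h0 => simp
  | hom j x hx =>
    change e.lin (degZeroF P X h x) = _
    rw [degZeroF_hom P X h hx, e.pr, hh', Y.pr_same (g.grad _ _ hx)]
  | hadd x y hx hy => simp only [map_add, hx, hy]

/-- Composition. -/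
def GHom.comp {X Y Z : 𝒜.GMod} (g : GHom Y Z) (f : GHom X Y) : GHom X Z where
  lin := g.lin ∘ₗ f.lin
  grad := fun j x hx => g.grad j _ (f.grad j x hx)

/-- Negation. -/
def GHom.neg {X Y : 𝒜.GMod} (g : GHom X Y) : GHom X Y where
  lin := -g.lin
  grad := fun j x hx => neg_mem (g.grad j x hx)

/-- Direct sum of two graded modules. -/
def GMod.prod (X Y : 𝒜.GMod) : 𝒜.GMod where
  M := X.M × Y.M
  grading := fun j => (X.grading j).prod (Y.grading j)
  sup_eq_top := by
    rw [eq_top_iff]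
    rintro ⟨x, y⟩ -
    have h1 : ∀ x : X.M, (x, (0 : Y.M)) ∈ ⨆ j, (X.grading j).prod (Y.grading j) := by
      intro x
      induction x using X.induct with
      | h0 => exact zero_mem _
      | hom j x hx => exact Submodule.mem_iSup_of_mem j ⟨hx, zero_mem _⟩
      | hadd x y hx hy => simpa using add_mem hx hy
    have h2 : ∀ y : Y.M, ((0 : X.M), y) ∈ ⨆ j, (X.grading j).prod (Y.grading j) := by
      intro x
      induction x using Y.induct with
      | h0 => exact zero_mem _
      | hom j x hx => exact Submodule.mem_iSup_of_mem j ⟨zero_mem _, hx⟩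
      | hadd x y hx hy => simpa using add_mem hx hy
    simpa using add_mem (h1 x) (h2 y)
  indep := by
    rw [iSupIndep_def]
    intro j
    rw [Submodule.disjoint_def]
    rintro ⟨x, y⟩ ⟨hx, hy⟩ h
    have h1 : x ∈ ⨆ i, ⨆ (_ : i ≠ j), X.grading i := by
      have : (⨆ i, ⨆ (_ : i ≠ j), (X.grading i).prod (Y.grading i)) ≤
          (⨆ i, ⨆ (_ : i ≠ j), X.grading i).comap (LinearMap.fst F X.M Y.M) := by
        refine iSup₂_le fun i hi z hz => ?_
        exact Submodule.mem_iSup_of_mem i (Submodule.mem_iSup_of_mem hi hz.1)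
      exact this h
    have h2 : y ∈ ⨆ i, ⨆ (_ : i ≠ j), Y.grading i := by
      have : (⨆ i, ⨆ (_ : i ≠ j), (X.grading i).prod (Y.grading i)) ≤
          (⨆ i, ⨆ (_ : i ≠ j), Y.grading i).comap (LinearMap.snd F X.M Y.M) := by
        refine iSup₂_le fun i hi z hz => ?_
        exact Submodule.mem_iSup_of_mem i (Submodule.mem_iSup_of_mem hi hz.2)
      exact this h
    have e1 := Submodule.disjoint_def.1 (iSupIndep_def.1 X.indep j) x hx h1
    have e2 := Submodule.disjoint_def.1 (iSupIndep_def.1 Y.indep j) y hy h2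
    rw [e1, e2]; rfl
  smul_mem := fun ha hm => ⟨X.smul_mem ha hm.1, Y.smul_mem ha hm.2⟩

theorem GMod.GenInDeg.prod {X Y : 𝒜.GMod} {s : ℤ} (hX : X.GenInDeg s) (hY : Y.GenInDeg s) :
    (X.prod Y).GenInDeg s := by
  unfold GMod.GenInDeg at *
  rw [eq_top_iff]
  rintro ⟨x, y⟩ -
  have h1 : Submodule.span 𝒜.A (X.grading s : Set X.M) ≤
      (Submodule.span 𝒜.A ((X.prod Y).grading s : Set (X.prod Y).M)).comap
        (LinearMap.inl 𝒜.A X.M Y.M) :=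
    Submodule.span_le.2 fun z hz => Submodule.subset_span ⟨hz, zero_mem _⟩
  have h2 : Submodule.span 𝒜.A (Y.grading s : Set Y.M) ≤
      (Submodule.span 𝒜.A ((X.prod Y).grading s : Set (X.prod Y).M)).comap
        (LinearMap.inr 𝒜.A X.M Y.M) :=
    Submodule.span_le.2 fun z hz => Submodule.subset_span ⟨zero_mem _, hz⟩
  rw [hX] at h1
  rw [hY] at h2
  have e1 := h1 (x := x) trivial
  have e2 := h2 (x := y) trivial
  have e : ((x, y) : X.M × Y.M) = (LinearMap.inl 𝒜.A X.M Y.M) x + (LinearMap.inr 𝒜.A X.M Y.M) y := by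
    simp
  rw [e]
  exact add_mem e1 e2

theorem mem_jideal {i : ℕ} (hi : 0 < i) {a : 𝒜.A} (ha : a ∈ 𝒜.grading i) : a ∈ 𝒜.jideal := by
  change a ∈ HomogeneousIdeal.irrelevant 𝒜.grading
  rw [HomogeneousIdeal.mem_irrelevant_iff, GradedRing.proj_apply,
    DirectSum.decompose_of_mem_ne 𝒜.grading ha hi.ne']

theorem mem_J_smul {X : 𝒜.GMod} {s j : ℤ} (hX : X.GenInDeg s) (hj : s < j) {x : X.M}
    (hx : x ∈ X.grading j) : x ∈ 𝒜.jideal • (⊤ : Submodule 𝒜.A X.M) := by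
  have key : ∀ y : X.M, X.pr j y ∈ 𝒜.jideal • (⊤ : Submodule 𝒜.A X.M) := by
    intro y
    have hy : y ∈ Submodule.span 𝒜.A (X.grading s : Set X.M) := by
      rw [show Submodule.span 𝒜.A (X.grading s : Set X.M) = ⊤ from hX]; trivial
    induction hy using Submodule.closure_induction with
    | zero => simp
    | add x y _ _ hx hy => rw [map_add]; exact add_mem hx hy
    | smul_mem a x hx =>
      induction a using alg_induct with
      | h0 => simp
      | hadd a b ha hb => rw [add_smul, map_add]; exact add_mem ha hb
      | hom i a ha =>
        by_cases h : (i : ℤ) + s = j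
        · rw [← h, X.pr_smul ha]
          exact Submodule.smul_mem_smul (mem_jideal (by omega) ha) trivial
        · rw [X.pr_ne (X.smul_mem ha hx) h]
          exact zero_mem _
  rw [← X.pr_same hx]
  exact key x

theorem range_le_J {X Y : 𝒜.GMod} {s t : ℤ} (hX : X.GenInDeg s) (hY : Y.GenInDeg t) (hj : s < t)
    (g : GHom Y X) : LinearMap.range g.lin ≤ 𝒜.jideal • (⊤ : Submodule 𝒜.A X.M) := by
  rw [← Submodule.map_top, ← show Submodule.span 𝒜.A (Y.grading t : Set Y.M) = ⊤ from hY,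
    Submodule.map_span, Submodule.span_le]
  rintro _ ⟨y, hy, rfl⟩
  exact mem_J_smul hX hj (g.grad _ _ hy)

theorem jump_lt (d p n : ℕ) (hp : 2 ≤ p) (hpd : p ≤ d) : jump d p n < jump d p (n + 1) := by
  have key : ∀ m, jump d p m = m / p * d + m % p := by
    intro m
    unfold jump
    congr 2
    have := Nat.div_add_mod m p
    rw [show m - m % p = p * (m / p) by omega]
    exact Nat.mul_div_cancel_left _ (by omega)
  rw [key, key]
  have hr := Nat.mod_lt n (show 0 < p by omega)
  by_cases h : n % p + 1 = p
  · have e : n + 1 = p * (n / p + 1) := by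
      have := Nat.div_add_mod n p
      rw [mul_add]; omega
    rw [e, Nat.mul_div_cancel_left _ (by omega), Nat.mul_mod_right, add_mul]
    omega
  · have e : n + 1 = (n % p + 1) + p * (n / p) := by
      have := Nat.div_add_mod n p
      omega
    have e1 : (n + 1) / p = n / p := by
      conv_lhs => rw [e]
      rw [Nat.add_mul_div_left _ _ (by omega), Nat.div_eq_of_lt (by omega), zero_add]
    have e2 : (n + 1) % p = n % p + 1 := by
      conv_lhs => rw [e]
      rw [Nat.add_mul_mod_self_left, Nat.mod_eq_of_lt (by omega)]
    rw [e1, e2]; omega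

/-- The horseshoe differential. -/
def hsd {X Y X' Y' : 𝒜.GMod} (a : GHom X X') (b : GHom Y Y') (t : GHom Y X') :
    GHom (X.prod Y) (X'.prod Y') where
  lin := ((a.lin ∘ₗ LinearMap.fst 𝒜.A X.M Y.M + t.lin ∘ₗ LinearMap.snd 𝒜.A X.M Y.M).prod
    (b.lin ∘ₗ LinearMap.snd 𝒜.A X.M Y.M) : X.M × Y.M →ₗ[𝒜.A] X'.M × Y'.M)
  grad := fun j x hx => ⟨add_mem (a.grad _ _ hx.1) (t.grad _ _ hx.2), b.grad _ _ hx.2⟩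

theorem hsd_apply {X Y X' Y' : 𝒜.GMod} (a : GHom X X') (b : GHom Y Y') (t : GHom Y X')
    (x : X.M) (y : Y.M) : (hsd a b t).lin ((x, y) : X.M × Y.M) =
      ((a.lin x + t.lin y, b.lin y) : X'.M × Y'.M) := rfl

/-- The horseshoe augmentation. -/
def hsa {X Y Z : 𝒜.GMod} (a : GHom X Z) (t : GHom Y Z) :
    GHom (X.prod Y) Z where
  lin := (a.lin ∘ₗ LinearMap.fst 𝒜.A X.M Y.M + t.lin ∘ₗ LinearMap.snd 𝒜.A X.M Y.M :
    X.M × Y.M →ₗ[𝒜.A] Z.M)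
  grad := fun j x hx => add_mem (a.grad _ _ hx.1) (t.grad _ _ hx.2)

theorem hsa_apply {X Y Z : 𝒜.GMod} (a : GHom X Z) (t : GHom Y Z)
    (x : X.M) (y : Y.M) : (hsa a t).lin ((x, y) : X.M × Y.M) = a.lin x + t.lin y := rfl

theorem rel_of_range_eq {X Y Z : 𝒜.GMod} {a : GHom X Y} {b : GHom Y Z}
    (h : LinearMap.range a.lin = LinearMap.ker b.lin) (x : X.M) : b.lin (a.lin x) = 0 := by
  have : a.lin x ∈ LinearMap.ker b.lin := h ▸ ⟨x, rfl⟩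
  exact this

theorem exists_theta {K N : 𝒜.GMod} (RK : MinRes K) (RN : MinRes N)
    (t0 : GHom (RN.P 1) (RK.P 0))
    (h0 : ∀ y, t0.lin ((RN.d 1).lin y) ∈ LinearMap.range (RK.d 0).lin) :
    ∃ θ : ∀ n, GHom (RN.P (n + 1)) (RK.P n), θ 0 = t0 ∧
      ∀ n y, (RK.d n).lin ((θ (n + 1)).lin y) = - (θ n).lin ((RN.d (n + 1)).lin y) := by
  have step : ∀ n (t : GHom (RN.P (n + 1)) (RK.P n)),
      (∀ y, t.lin ((RN.d (n + 1)).lin y) ∈ LinearMap.range (RK.d n).lin) →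
      ∃ t' : GHom (RN.P (n + 1 + 1)) (RK.P (n + 1)),
        (∀ y, (RK.d n).lin (t'.lin y) = - t.lin ((RN.d (n + 1)).lin y)) ∧
        (∀ y, t'.lin ((RN.d (n + 1 + 1)).lin y) ∈ LinearMap.range (RK.d (n + 1)).lin) := by
    intro n t ht
    obtain ⟨t', ht'⟩ := graded_lift (RN.projective (n + 1 + 1)) (RK.d n)
      (t.comp (RN.d (n + 1))).neg (fun x => neg_mem (ht x))
    refine ⟨t', ht', fun y => ?_⟩
    rw [RK.exact n, LinearMap.mem_ker, ht']
    change - t.lin ((RN.d (n + 1)).lin _) = 0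
    rw [rel_of_range_eq (RN.exact (n + 1)), map_zero, neg_zero]
  choose S hS1 hS2 using step
  let Θ : ∀ n, {t : GHom (RN.P (n + 1)) (RK.P n) //
      ∀ y, t.lin ((RN.d (n + 1)).lin y) ∈ LinearMap.range (RK.d n).lin} := fun n =>
    Nat.rec ⟨t0, h0⟩ (fun n t => ⟨S n t.1 t.2, hS2 n t.1 t.2⟩) n
  exact ⟨fun n => (Θ n).1, rfl, fun n y => hS1 n (Θ n).1 (Θ n).2 y⟩

end Helpers

end GradedAlg

open GradedAlg in
/-- **Proposition (extension closure).** Let `0 → K → M → N → 0` be a short exact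
sequence of finitely generated graded `A`-modules over a piecewise-Koszul algebra `A`.
If `K` and `N` are piecewise-Koszul modules generated in the same degree `s`, then `M`
is a piecewise-Koszul module. -/
theorem isPKMod_of_extension
    {F : Type} [Field F] (𝒜 : GradedAlg F) (hA : 𝒜.Standing)
    (p d : ℕ) (hp : 2 ≤ p) (hpd : p ≤ d)
    (T : 𝒜.GMod) (hT : IsTrivialGMod T) (hpk : 𝒜.IsPKAlg p d T)
    (K M N : 𝒜.GMod)
    (hKfg : Module.Finite 𝒜.A K.M) (hMfg : Module.Finite 𝒜.A M.M)
    (hNfg : Module.Finite 𝒜.A N.M)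
    (f : GHom K M) (g : GHom M N)
    (hf : Function.Injective f.lin) (hg : Function.Surjective g.lin)
    (hexact : LinearMap.range f.lin = LinearMap.ker g.lin)
    (s : ℤ) (hKs : K.GenInDeg s) (hNs : N.GenInDeg s)
    (hK : 𝒜.IsPKMod p d s K) (hN : 𝒜.IsPKMod p d s N) :
    𝒜.IsPKMod p d s M := by
  obtain ⟨RK, hRK⟩ := hK
  obtain ⟨RN, hRN⟩ := hN
  have gf : ∀ x, g.lin (f.lin x) = 0 := rel_of_range_eq hexact
  have gker : ∀ m, g.lin m = 0 → ∃ x, (f.comp RK.aug).lin x = m := by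
    intro m hm
    have : m ∈ LinearMap.range f.lin := by rw [hexact]; exact hm
    obtain ⟨k, rfl⟩ := this
    obtain ⟨x, rfl⟩ := RK.aug_surj k
    exact ⟨x, rfl⟩
  obtain ⟨h0, hh0⟩ := graded_lift (RN.projective 0) g RN.aug (fun x => hg _)
  have augd := rel_of_range_eq RN.exact_aug
  obtain ⟨t0, ht0⟩ := graded_lift (RN.projective 1) (f.comp RK.aug) (h0.comp (RN.d 0)).neg
    (fun x => gker _ (by
      change g.lin (- h0.lin ((RN.d 0).lin x)) = 0
      rw [map_neg, hh0, augd, neg_zero]))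
  have ht0' : ∀ y, f.lin (RK.aug.lin (t0.lin y)) = - h0.lin ((RN.d 0).lin y) := ht0
  obtain ⟨θ, hθ0, hθ⟩ := exists_theta RK RN t0 (fun y => by
    rw [RK.exact_aug, LinearMap.mem_ker]
    apply hf
    rw [ht0', rel_of_range_eq (RN.exact 0), map_zero, map_zero, neg_zero])
  have hgen : ∀ n, ((RK.P n).prod (RN.P n)).GenInDeg ((jump d p n : ℤ) + s) :=
    fun n => (hRK n).prod (hRN n)
  refine ⟨{ P := fun n => (RK.P n).prod (RN.P n)
            d := fun n => hsd (RK.d n) (RN.d n) (θ n)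
            aug := hsa (f.comp RK.aug) h0
            fg := ?_
            projective := ?_
            aug_surj := ?_
            exact_aug := ?_
            exact := ?_
            minimal := ?_ }, hgen⟩
  · intro n
    haveI := RK.fg n
    haveI := RN.fg n
    exact inferInstanceAs (Module.Finite 𝒜.A ((RK.P n).M × (RN.P n).M))
  · intro n
    haveI := RK.projective n
    haveI := RN.projective n
    exact inferInstanceAs (Module.Projective 𝒜.A ((RK.P n).M × (RN.P n).M))
  · intro m
    obtain ⟨y, hy⟩ := RN.aug_surj (g.lin m)
    obtain ⟨x, hx⟩ := gker (m - h0.lin y) (by rw [map_sub, hh0, hy, sub_self])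
    refine ⟨((x, y) : (RK.P 0).M × (RN.P 0).M), ?_⟩
    rw [hsa_apply, hx, sub_add_cancel]
  · apply le_antisymm
    · rintro _ ⟨⟨x, y⟩, rfl⟩
      rw [LinearMap.mem_ker, hsd_apply, hsa_apply]
      change f.lin (RK.aug.lin _) + _ = 0
      rw [map_add, rel_of_range_eq RK.exact_aug, zero_add, hθ0, ht0', neg_add_cancel]
    · rintro ⟨x, y⟩ hxy
      replace hxy : f.lin (RK.aug.lin x) + h0.lin y = 0 := hxy
      have hy : y ∈ LinearMap.range (RN.d 0).lin := by
        rw [RN.exact_aug, LinearMap.mem_ker, ← hh0]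
        have := congrArg g.lin hxy
        rwa [map_add, gf, zero_add, map_zero] at this
      obtain ⟨y', rfl⟩ := hy
      have hx : x - t0.lin y' ∈ LinearMap.range (RK.d 0).lin := by
        rw [RK.exact_aug, LinearMap.mem_ker]
        apply hf
        rw [map_sub, map_sub, ht0', sub_neg_eq_add, hxy, map_zero]
      obtain ⟨x', hx'⟩ := hx
      refine ⟨((x', y') : (RK.P 1).M × (RN.P 1).M), ?_⟩
      rw [hsd_apply, hθ0, hx', sub_add_cancel]
  · intro n
    apply le_antisymm
    · rintro _ ⟨⟨x, y⟩, rfl⟩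
      rw [LinearMap.mem_ker, hsd_apply, hsd_apply, map_add, rel_of_range_eq (RK.exact n),
        rel_of_range_eq (RN.exact n), hθ, zero_add, neg_add_cancel]
      rfl
    · rintro ⟨x, y⟩ hxy
      replace hxy : (((RK.d n).lin x + (θ n).lin y, (RN.d n).lin y) :
        (RK.P n).M × (RN.P n).M) = 0 := hxy
      have h1 : (RK.d n).lin x + (θ n).lin y = 0 := congrArg Prod.fst hxy
      have h2 : (RN.d n).lin y = 0 := congrArg Prod.snd hxy
      have hy : y ∈ LinearMap.range (RN.d (n + 1)).lin := by
        rw [RN.exact n]; exact h2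
      obtain ⟨y', rfl⟩ := hy
      have hx : x - (θ (n + 1)).lin y' ∈ LinearMap.range (RK.d (n + 1)).lin := by
        rw [RK.exact n, LinearMap.mem_ker, map_sub, hθ, sub_neg_eq_add, h1]
      obtain ⟨x', hx'⟩ := hx
      refine ⟨((x', y') : (RK.P (n + 1 + 1)).M × (RN.P (n + 1 + 1)).M), ?_⟩
      rw [hsd_apply, hx', sub_add_cancel]
  · intro n
    refine range_le_J (hgen n) (hgen (n + 1)) ?_ _
    have := jump_lt d p n hp hpd
    omega
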